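/- arXiv:1606.02767 — 2 statements merged into one kernel-verified Lean document; each statement's English description precedes it below -/
import Mathlib

section
/- Let Γ be an alphabet with a distinguished blank symbol (blank = default), Q a type of states, and T : Turing.Tape Γ a tape. Suppose two transition rules with the same left-hand side, (q, T.head) → (q₁, w₁, d₁) and (q, T.head) → (q₂, w₂, d₂) (with qᵢ : Q, wᵢ : Γ, dᵢ a direction or stay), produce the same next configuration: q₁ = q₂ and the tape obtained by writing w₁ then moving d₁ equals the tape obtained by writing w₂ then moving d₂. If it is not the case that T's left half-tape is entirely blank, T's right half-tape is entirely blank, and w₁ = default, then the two rules are identical: q₁ = q₂, w₁ = w₂, and d₁ = d₂. -/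
/-- Apply an optional move direction to a tape: `none` means "stay" (no move). -/
def moveOpt {Γ : Type*} [Inhabited Γ] (d : Option Turing.Dir) (T : Turing.Tape Γ) :
    Turing.Tape Γ :=
  match d with
  | none => T
  | some d => Turing.Tape.move d T

/-!
View a tape as a function `ℤ → Γ`, so that a move is a translation and a write changes position `0`
only. If the two rules shift by different amounts, the two written tapes `f` and `g` agree away from
`0` and satisfy `f i = g (i + k)` for some `k ≠ 0`. Along `i, i + k, i + 2k, …` the values of `f`
stay the same until the orbit meets `0`, and likewise along `i, i - k, i - 2k, …`; one of the two
orbits avoids `0`, and each leaves every finite set, so `f i` is blank.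
-/

section Translation

open Filter

variable {G α : Type*} {a : α}

theorem eq_of_eventually_cofinite_of_const_on_orbit [AddLeftCancelMonoid G] {f : G → α} {k : G}
    (hk : ¬ IsOfFinAddOrder k) (hf : ∀ᶠ y in cofinite, f y = a) (x : G)
    (horbit : ∀ n : ℕ, f (x + (n + 1) • k) = f (x + n • k)) : f x = a := by
  have hconst (n : ℕ) : f (x + n • k) = f x := by
    induction n with
    | zero => rw [zero_nsmul, add_zero]
    | succ n ih => rw [horbit, ih]
  have hinj : Function.Injective fun n : ℕ ↦ x + n • k :=
    (add_right_injective x).comp (injective_nsmul_iff_not_isOfFinAddOrder.2 hk)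
  obtain ⟨n, hn⟩ := (hinj.tendsto_cofinite.eventually hf).exists
  rw [← hconst n, hn]

theorem eq_of_eq_comp_add_right_of_eqOn_compl_singleton [AddGroup G] {f g : G → α} {k c : G}
    (hk : ¬ IsOfFinAddOrder k) (hf : ∀ᶠ y in cofinite, f y = a)
    (htrans : ∀ x, f x = g (x + k)) (hfg : Set.EqOn f g {c}ᶜ) (x : G) : f x = a := by
  by_cases hforward : ∀ n : ℕ, x + (n + 1) • k ≠ c
  · refine eq_of_eventually_cofinite_of_const_on_orbit hk hf x fun n ↦ ?_
    rw [hfg (hforward n), htrans (x + n • k), add_assoc, succ_nsmul]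
  · obtain ⟨n, hn⟩ := not_forall_not.1 hforward
    have hbackward (m : ℕ) : x + m • -k ≠ c := by
      intro hm
      have hloop : (n + 1) • k = m • -k := add_left_cancel (hn.trans hm.symm)
      refine hk (isOfFinAddOrder_iff_nsmul_eq_zero.2 ⟨m + (n + 1), by lia, ?_⟩)
      rw [add_nsmul, hloop, neg_nsmul, add_neg_cancel]
    have hk_neg : ¬ IsOfFinAddOrder (-k) := mt isOfFinAddOrder_neg_iff.1 hk
    refine eq_of_eventually_cofinite_of_const_on_orbit hk_neg hf x fun m ↦ ?_
    rw [hfg (hbackward m), htrans, succ_nsmul, add_assoc, neg_add_cancel_right]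

end Translation

section Tape

open Filter Turing

variable {Γ : Type*} [Inhabited Γ]

theorem listBlank_nth_default (n : ℕ) : (default : ListBlank Γ).nth n = default :=
  (ListBlank.nth_mk [] n).trans (List.getI_eq_default [] n.zero_le)

theorem listBlank_eventually_nth_eq_default (L : ListBlank Γ) :
    ∀ᶠ n in cofinite, L.nth n = default := by
  rw [Nat.cofinite_eq_atTop]
  refine L.induction_on fun l ↦ ?_
  filter_upwards [eventually_ge_atTop l.length] with n hn
  rw [ListBlank.nth_mk, List.getI_eq_default l hn]

theorem tape_nth_default : ∀ i : ℤ, (default : Tape Γ).nth i = default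
  | 0 => rfl
  | (n + 1 : ℕ) => listBlank_nth_default n
  | -(n + 1 : ℕ) => listBlank_nth_default n

theorem tape_ext_nth {T T' : Tape Γ} (h : ∀ i, T.nth i = T'.nth i) : T = T' := by
  obtain ⟨a, L, R⟩ := T
  obtain ⟨a', L', R'⟩ := T'
  obtain rfl : a = a' := h 0
  obtain rfl : L = L' := ListBlank.ext fun n ↦ h (-(n + 1 : ℕ))
  obtain rfl : R = R' := ListBlank.ext fun n ↦ h (n + 1 : ℕ)
  rfl

theorem tape_eventually_nth_eq_default (T : Tape Γ) : ∀ᶠ i in cofinite, T.nth i = default := by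
  have hright : {n : ℕ | T.right₀.nth n ≠ default}.Finite :=
    listBlank_eventually_nth_eq_default T.right₀
  have hleft : {n : ℕ | T.left.nth n ≠ default}.Finite :=
    listBlank_eventually_nth_eq_default T.left
  refine ((hright.image Int.ofNat).union (hleft.image Int.negSucc)).subset ?_
  rintro (n | n) hn
  · exact .inl ⟨n, fun h ↦ hn ((T.right₀_nth n).symm.trans h), rfl⟩
  · exact .inr ⟨n, hn, rfl⟩

theorem tape_eq_default_of_nth_eq_nth_add {T T' : Tape Γ} {k c : ℤ} (hk : k ≠ 0)
    (htrans : ∀ i, T.nth i = T'.nth (i + k)) (hoff : Set.EqOn T.nth T'.nth {c}ᶜ) :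
    T = default := by
  refine tape_ext_nth fun i ↦ ?_
  rw [tape_nth_default]
  exact eq_of_eq_comp_add_right_of_eqOn_compl_singleton (mt (isOfFinAddOrder_iff_eq_zero k).1 hk)
    (tape_eventually_nth_eq_default T) htrans hoff i

theorem tape_eqOn_nth_write (T : Tape Γ) (w w' : Γ) :
    Set.EqOn (T.write w).nth (T.write w').nth {0}ᶜ := by
  rintro i (hi : i ≠ 0)
  rw [Tape.write_nth, Tape.write_nth, if_neg hi, if_neg hi]

/-- The displacement of the head along `ℤ` effected by an optional move, with positions increasing
to the right as in `Turing.Tape.nth`. -/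
def headShift : Option Dir → ℤ
  | none => 0
  | some .left => -1
  | some .right => 1

theorem headShift_injective : Function.Injective headShift := by
  rintro (_ | _ | _) (_ | _ | _) h <;> first | rfl | cases h

theorem moveOpt_nth (d : Option Dir) (T : Tape Γ) (i : ℤ) :
    (moveOpt d T).nth i = T.nth (i + headShift d) := by
  rcases d with _ | _ | _
  · exact congrArg T.nth (add_zero i).symm
  · exact T.move_left_nth i
  · exact T.move_right_nth i

theorem nth_eq_nth_add_of_moveOpt_eq {T T' : Tape Γ} {d d' : Option Dir}
    (h : moveOpt d T = moveOpt d' T') (i : ℤ) :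
    T.nth i = T'.nth (i + (headShift d' - headShift d)) := by
  have hnth := congrArg (Tape.nth · (i - headShift d)) h
  simp only [moveOpt_nth, sub_add_cancel] at hnth
  rw [hnth, add_sub, sub_add_eq_add_sub]

end Tape

/-- Lemma 1 of the paper: if two transition rules `(q, T.head) → (qᵢ, wᵢ, dᵢ)` produce
the same next configuration (same state and same tape), and the trivial blank case
(`T.left`, `T.right` all blank and `w₁` blank) does not hold, then the two rules are
identical. -/
theorem rule_unique {Γ Q : Type*} [Inhabited Γ] (T : Turing.Tape Γ)
    (q q₁ q₂ : Q) (w₁ w₂ : Γ) (d₁ d₂ : Option Turing.Dir)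
    (hq : q₁ = q₂)
    (ht : moveOpt d₁ (T.write w₁) = moveOpt d₂ (T.write w₂))
    (hnontriv : ¬ (T.left = default ∧ T.right = default ∧ w₁ = default)) :
    q₁ = q₂ ∧ w₁ = w₂ ∧ d₁ = d₂ := by
  have htrans := nth_eq_nth_add_of_moveOpt_eq ht
  have hd : d₁ = d₂ := by
    by_contra hne
    have hk : headShift d₂ - headShift d₁ ≠ 0 :=
      sub_ne_zero.2 (headShift_injective.ne (Ne.symm hne))
    have hblank : T.write w₁ = default :=
      tape_eq_default_of_nth_eq_nth_add hk htrans (tape_eqOn_nth_write T w₁ w₂)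
    exact hnontriv ⟨congrArg Turing.Tape.left hblank, congrArg Turing.Tape.right hblank,
      congrArg Turing.Tape.head hblank⟩
  subst hd
  have hw : w₁ = w₂ := by simpa [Turing.Tape.write] using htrans 0
  exact ⟨hq, hw, rfl⟩
end

section
/- Let Γ be an alphabet with a distinguished blank symbol (blank = default) and T : Turing.Tape Γ. For symbols w₁, w₂ : Γ, the tape obtained by writing w₁ and moving left equals the tape obtained by writing w₂ and moving right, i.e. Tape.move Turing.Dir.left (T.write w₁) = Tape.move Turing.Dir.right (T.write w₂), if and only if w₁ = default, w₂ = default, the left half-tape of T is entirely blank (T.left = default), and the right half-tape of T is entirely blank (T.right = default). -/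
/-! If the two moves produce the same tape, then `T.left.tail = T.left.cons w₂` and
`T.right.tail = T.right.cons w₁`, so each half-tape is unchanged by dropping its first two cells.
Dropping enough cells from a cofinitely blank half-tape leaves only blanks, hence a half-tape that
is periodic under `tail` is blank. -/

section ListBlank

open Function Turing

variable {Γ : Type*} [Inhabited Γ]

theorem listBlank_head_default : (default : ListBlank Γ).head = default := rfl

theorem listBlank_tail_default : (default : ListBlank Γ).tail = default := rfl

theorem listBlank_tail_iterate_mk (l : List Γ) (n : ℕ) :
    ListBlank.tail^[n] (ListBlank.mk l) = ListBlank.mk (l.drop n) := by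
  induction n generalizing l with
  | zero => rfl
  | succ n ih => rw [iterate_succ_apply, ListBlank.tail_mk, ih, List.drop_tail]

theorem listBlank_exists_tail_iterate_eq_default (L : ListBlank Γ) :
    ∃ n, ListBlank.tail^[n] L = default := by
  induction L using ListBlank.induction_on with
  | h l =>
    refine ⟨l.length, ?_⟩
    rw [listBlank_tail_iterate_mk, List.drop_length]
    rfl

theorem listBlank_isPeriodicPt_tail_iff {p : ℕ} (hp : 0 < p) {L : ListBlank Γ} :
    IsPeriodicPt ListBlank.tail p L ↔ L = default := by
  have default_isFixedPt : IsFixedPt ListBlank.tail (default : ListBlank Γ) :=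
    listBlank_tail_default
  refine ⟨fun periodic => ?_, fun blank => blank ▸ default_isFixedPt.isPeriodicPt p⟩
  obtain ⟨n, tail_blank⟩ := listBlank_exists_tail_iterate_eq_default L
  calc
    L = ListBlank.tail^[p * n] L := (periodic.mul_const n).eq.symm
    _ = ListBlank.tail^[p * n - n] (ListBlank.tail^[n] L) := by
      rw [← iterate_add_apply, Nat.sub_add_cancel (Nat.le_mul_of_pos_left n hp)]
    _ = default := by rw [tail_blank, (default_isFixedPt.iterate _).eq]

theorem listBlank_cons_eq_default_iff {a : Γ} {L : ListBlank Γ} :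
    L.cons a = default ↔ a = default ∧ L = default := by
  constructor
  · intro h
    constructor
    · rw [← ListBlank.head_cons a L, h, listBlank_head_default]
    · rw [← ListBlank.tail_cons a L, h, listBlank_tail_default]
  · rintro ⟨rfl, rfl⟩
    exact ListBlank.cons_head_tail default

theorem listBlank_tail_eq_cons_iff {a : Γ} {L : ListBlank Γ} :
    L.tail = L.cons a ↔ a = default ∧ L = default := by
  constructor
  · intro h
    have periodic : IsPeriodicPt ListBlank.tail 2 L :=
      (congrArg ListBlank.tail h).trans (ListBlank.tail_cons a L)
    have blank : L = default := (listBlank_isPeriodicPt_tail_iff two_pos).mp periodic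
    rw [← listBlank_cons_eq_default_iff, ← h, blank, listBlank_tail_default]
  · rintro ⟨rfl, rfl⟩
    rw [listBlank_tail_default, listBlank_cons_eq_default_iff.mpr ⟨rfl, rfl⟩]

end ListBlank

/-- The "left-move versus right-move" case in the proof of the paper's Lemma 1:
writing `w₁` and moving left gives the same tape as writing `w₂` and moving right
iff both written symbols are blank and both half-tapes of `T` are entirely blank. -/
theorem write_move_left_eq_write_move_right_iff {Γ : Type*} [Inhabited Γ]
    (T : Turing.Tape Γ) (w₁ w₂ : Γ) :
    Turing.Tape.move Turing.Dir.left (T.write w₁) =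
        Turing.Tape.move Turing.Dir.right (T.write w₂) ↔
      w₁ = default ∧ w₂ = default ∧ T.left = default ∧ T.right = default := by
  obtain ⟨a, L, R⟩ := T
  calc
    _ ↔ L.head = R.head ∧ L.tail = L.cons w₂ ∧ R.cons w₁ = R.tail := by
      simp only [Turing.Tape.write, Turing.Tape.move, Turing.Tape.mk.injEq]
    _ ↔ L.head = R.head ∧ (w₂ = default ∧ L = default) ∧ w₁ = default ∧ R = default := by
      rw [eq_comm (a := R.cons w₁), listBlank_tail_eq_cons_iff, listBlank_tail_eq_cons_iff]
    _ ↔ w₁ = default ∧ w₂ = default ∧ L = default ∧ R = default := by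
      constructor
      · rintro ⟨_, ⟨hw₂, hL⟩, hw₁, hR⟩
        exact ⟨hw₁, hw₂, hL, hR⟩
      · rintro ⟨hw₁, hw₂, hL, hR⟩
        exact ⟨by rw [hL, hR], ⟨hw₂, hL⟩, hw₁, hR⟩
end
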